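/- Let k ≥ 1. For all distinct u, v ∈ ℕ and for every choice of X ∈ {R_k, T_k} and Y ∈ {R_k, T_k}, there exists w ∈ ℕ with (w,u) ∈ X and (w,v) ∈ Y. -/

import Mathlib

/-- For `k ≥ 1`, the relation `R_k ⊆ ℕ × ℕ`: `(u,v) ∈ R_k` iff
`v = 2^u·3^j` or `v = 2^j·3^u` for some `j`, or `u = 2^v·3^j` or `u = 2^j·3^v`
for some `j`, or `u = 2^v·5^k`. -/
def Rk (k : ℕ) : Set (ℕ × ℕ) :=
  {p | (∃ j : ℕ, p.2 = 2 ^ p.1 * 3 ^ j ∨ p.2 = 2 ^ j * 3 ^ p.1) ∨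
       (∃ j : ℕ, p.1 = 2 ^ p.2 * 3 ^ j ∨ p.1 = 2 ^ j * 3 ^ p.2) ∨
       p.1 = 2 ^ p.2 * 5 ^ k}

/-- `T_k = (ℕ × ℕ) ∖ R_k`. -/
def Tk (k : ℕ) : Set (ℕ × ℕ) := (Rk k)ᶜ

/-!
All witnesses have the form `w = 2 ^ a * 3 ^ b`. If `n ≤ w`, then `n` is too small to be
`2 ^ w * 3 ^ j` or `2 ^ j * 3 ^ w`, and comparing the exponents of `2` and `3` in the remaining
clauses of `Rk` shows that `w` is related to `n` exactly when `n = a` or `n = b`. Choosing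
`a ∈ {u, u + v + 1}` and `b ∈ {v, u + v + 1}` therefore prescribes the two relations independently.
-/

theorem eq_of_pow_mul_eq_pow_mul_of_coprime {p a b q r : ℕ} (hp : 1 < p) (hq : p.Coprime q)
    (hr : p.Coprime r) (h : p ^ a * q = p ^ b * r) : a = b := by
  have ha : p ^ a ∣ p ^ b := (hr.pow_left a).dvd_of_dvd_mul_right (Dvd.intro q h)
  have hb : p ^ b ∣ p ^ a := (hq.pow_left b).dvd_of_dvd_mul_right (Dvd.intro r h.symm)
  exact le_antisymm ((Nat.pow_dvd_pow_iff_le_right hp).1 ha)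
    ((Nat.pow_dvd_pow_iff_le_right hp).1 hb)

theorem lt_pow_mul {p q : ℕ} (a : ℕ) (hp : 1 < p) (hq : 0 < q) : a < p ^ a * q :=
  (Nat.lt_pow_self hp).trans_le (Nat.le_mul_of_pos_right _ hq)

theorem lt_mul_pow {p q : ℕ} (a : ℕ) (hp : 1 < p) (hq : 0 < q) : a < q * p ^ a :=
  mul_comm q (p ^ a) ▸ lt_pow_mul a hp hq

theorem max_lt_pow_mul_pow {p q : ℕ} (a b : ℕ) (hp : 1 < p) (hq : 1 < q) :
    max a b < p ^ a * q ^ b :=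
  max_lt (lt_pow_mul a hp (by positivity)) (lt_mul_pow b hq (by positivity))

theorem two_pow_mul_three_pow_mem_Rk_iff {k a b n : ℕ} (hn : n ≤ 2 ^ a * 3 ^ b) :
    (2 ^ a * 3 ^ b, n) ∈ Rk k ↔ n = a ∨ n = b := by
  constructor
  · have two_exponent {m c q : ℕ} (hq : Nat.Coprime 2 q) (h : 2 ^ a * 3 ^ b = 2 ^ c * q ^ m) :
        c = a :=
      (eq_of_pow_mul_eq_pow_mul_of_coprime one_lt_two (Nat.Coprime.pow_right b (by norm_num))
        (hq.pow_right m) h).symm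
    have three_exponent {m c : ℕ} (h : 2 ^ a * 3 ^ b = 2 ^ m * 3 ^ c) : c = b := by
      rw [mul_comm, mul_comm (2 ^ m)] at h
      exact (eq_of_pow_mul_eq_pow_mul_of_coprime (by norm_num)
        (Nat.Coprime.pow_right a (by norm_num)) (Nat.Coprime.pow_right m (by norm_num)) h).symm
    rintro (⟨j, h | h⟩ | ⟨j, h | h⟩ | h)
    · exact absurd h (hn.trans_lt (lt_pow_mul _ one_lt_two (by positivity))).ne
    · exact absurd h (hn.trans_lt (lt_mul_pow _ (by norm_num) (by positivity))).ne
    · exact Or.inl (two_exponent (by norm_num) h)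
    · exact Or.inr (three_exponent h)
    · exact Or.inl (two_exponent (by norm_num) h)
  · rintro (rfl | rfl)
    · exact Or.inr (Or.inl ⟨b, Or.inl rfl⟩)
    · exact Or.inr (Or.inl ⟨a, Or.inr rfl⟩)

/-- For `k ≥ 1`, all distinct `u, v ∈ ℕ` and every choice of
`X, Y ∈ {R_k, T_k}`, there is `w` with `(w,u) ∈ X` and `(w,v) ∈ Y`. -/
theorem stmt_8 (k : ℕ) (hk : 1 ≤ k) (u v : ℕ) (huv : u ≠ v)
    (X Y : Set (ℕ × ℕ)) (hX : X = Rk k ∨ X = Tk k) (hY : Y = Rk k ∨ Y = Tk k) :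
    ∃ w : ℕ, (w, u) ∈ X ∧ (w, v) ∈ Y := by
  have mem_iff {a b n : ℕ} (hn : n ≤ max a b) : (2 ^ a * 3 ^ b, n) ∈ Rk k ↔ n = a ∨ n = b :=
    two_pow_mul_three_pow_mem_Rk_iff
      (hn.trans (max_lt_pow_mul_pow a b one_lt_two (by norm_num)).le)
  rcases hX with rfl | rfl <;> rcases hY with rfl | rfl
  · exact ⟨2 ^ u * 3 ^ v, (mem_iff (by omega)).2 (Or.inl rfl), (mem_iff (by omega)).2 (Or.inr rfl)⟩
  · exact ⟨2 ^ u * 3 ^ (u + v + 1), (mem_iff (by omega)).2 (Or.inl rfl),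
      (mem_iff (by omega)).not.2 (by omega)⟩
  · exact ⟨2 ^ (u + v + 1) * 3 ^ v, (mem_iff (by omega)).not.2 (by omega),
      (mem_iff (by omega)).2 (Or.inr rfl)⟩
  · exact ⟨2 ^ (u + v + 1) * 3 ^ (u + v + 1), (mem_iff (by omega)).not.2 (by omega),
      (mem_iff (by omega)).not.2 (by omega)⟩
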